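/- (Meyers–Ziemer inequality.) Let μ be a positive Radon measure on ℝⁿ satisfying K(μ) := sup{ μ(B_r(x))/r^{n−1} : x ∈ ℝⁿ, r > 0 } < ∞. Then there exists a constant c(n), depending only on n, such that | ∫_{ℝⁿ} φ dμ | ≤ c(n) K(μ) ∫_{ℝⁿ} |∇φ| dx for every φ ∈ C¹_c(ℝⁿ). -/

import Mathlib

open Set MeasureTheory Metric Real
open scoped RealInnerProductSpace ENNReal NNReal

noncomputable section

variable {n : ℕ}

/-- The Laplacian as the sum of second partial derivatives. -/
def lapl (f : EuclideanSpace ℝ (Fin n) → ℝ) (x : EuclideanSpace ℝ (Fin n)) : ℝ :=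
  ∑ i : Fin n,
    fderiv ℝ (fun y => fderiv ℝ f y (EuclideanSpace.single i 1)) x (EuclideanSpace.single i 1)

/-- Double-well potential. -/
structure DoubleWell (W : ℝ → ℝ) (γ α κ : ℝ) : Prop where
  smooth : ContDiff ℝ 3 W
  nonneg : ∀ s, 0 ≤ W s
  zero_iff : ∀ s, W s = 0 ↔ s = 1 ∨ s = -1
  deriv_one : deriv W 1 = 0
  deriv_neg_one : deriv W (-1) = 0
  γ_mem : γ ∈ Set.Ioo (-1 : ℝ) 1
  deriv_pos : ∀ s, -1 < s → s < γ → 0 < deriv W s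
  deriv_neg : ∀ s, γ < s → s < 1 → deriv W s < 0
  α_mem : α ∈ Set.Ioo (0 : ℝ) 1
  κ_pos : 0 < κ
  conv : ∀ s : ℝ, α ≤ |s| → κ ≤ deriv (deriv W) s

/-- The diffused interface energy measure. -/
def phaseMeasure (W : ℝ → ℝ) (ε : ℝ) (φ : EuclideanSpace ℝ (Fin n) → ℝ → ℝ) (t : ℝ) :
    Measure (EuclideanSpace ℝ (Fin n)) :=
  volume.withDensity fun x =>
    ENNReal.ofReal (ε * ‖gradient (fun y => φ y t) x‖ ^ 2 / 2 + W (φ x t) / ε)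

/-- Standing hypotheses: the Allen–Cahn equation with transport term, with regularity
and pointwise bounds. -/
structure StandingHyp (W : ℝ → ℝ) (Ω : Set (EuclideanSpace ℝ (Fin n)))
    (T ε β : ℝ) (φ : EuclideanSpace ℝ (Fin n) → ℝ → ℝ)
    (u : EuclideanSpace ℝ (Fin n) → ℝ → EuclideanSpace ℝ (Fin n)) : Prop where
  ε_pos : 0 < ε
  ε_lt_one : ε < 1
  T_pos : 0 < T
  u_smooth : ContDiff ℝ (⊤ : ℕ∞) fun p : EuclideanSpace ℝ (Fin n) × ℝ => u p.1 p.2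
  φ_space_reg : ∀ j : Fin 4, Continuous fun p : EuclideanSpace ℝ (Fin n) × ℝ =>
    iteratedFDeriv ℝ (j : ℕ) (fun y => φ y p.2) p.1
  φ_time_reg : Continuous fun p : EuclideanSpace ℝ (Fin n) × ℝ => deriv (φ p.1) p.2
  φ_time_grad_reg : Continuous fun p : EuclideanSpace ℝ (Fin n) × ℝ =>
    deriv (fun s => gradient (fun y => φ y s) p.1) p.2
  pde : ∀ x ∈ Ω, ∀ t ∈ Icc (0 : ℝ) T,
    deriv (φ x) t + ⟪u x t, gradient (fun y => φ y t) x⟫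
      = lapl (fun y => φ y t) x - deriv W (φ x t) / ε ^ 2
  φ_bound : ∀ x ∈ Ω, ∀ t ∈ Icc (0 : ℝ) T, |φ x t| ≤ 1
  u_bound : ∀ x ∈ Ω, ∀ t ∈ Icc (0 : ℝ) T, ‖u x t‖ ≤ ε ^ (-β)
  Du_bound : ∀ x ∈ Ω, ∀ t ∈ Icc (0 : ℝ) T, ‖fderiv ℝ (fun y => u y t) x‖ ≤ ε ^ (-(β + 1))

/-- The truncated backward heat kernel. -/
def heatKer (η : EuclideanSpace ℝ (Fin n) → ℝ) (y : EuclideanSpace ℝ (Fin n)) (s : ℝ)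
    (x : EuclideanSpace ℝ (Fin n)) (t : ℝ) : ℝ :=
  (4 * π * (s - t)) ^ (-((n : ℝ) - 1) / 2) * Real.exp (-‖x - y‖ ^ 2 / (4 * (s - t))) * η (x - y)

/-- Cutoff: smooth, compactly supported in `B_d(0)`, `1` on `B_{d/2}(0)`, between 0 and 1. -/
structure IsCutoff (η : EuclideanSpace ℝ (Fin n) → ℝ) (d : ℝ) : Prop where
  smooth : ContDiff ℝ (⊤ : ℕ∞) η
  supp : tsupport η ⊆ ball (0 : EuclideanSpace ℝ (Fin n)) d
  eq_one : ∀ x ∈ closedBall (0 : EuclideanSpace ℝ (Fin n)) (d / 2), η x = 1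
  nonneg : ∀ x, 0 ≤ η x
  le_one : ∀ x, η x ≤ 1

/-- The `W^{1,p}` norm of a vector field on `Ω`. -/
def W1pNorm (p : ℝ) (Ω : Set (EuclideanSpace ℝ (Fin n)))
    (v : EuclideanSpace ℝ (Fin n) → EuclideanSpace ℝ (Fin n)) : ℝ :=
  (∫ x in Ω, (‖v x‖ ^ p + ‖fderiv ℝ v x‖ ^ p)) ^ (1 / p)

/-- The `L^q([a,b]; W^{1,p}(Ω))` norm of a time dependent vector field. -/
def LqW1pNorm (q p a b : ℝ) (Ω : Set (EuclideanSpace ℝ (Fin n)))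
    (u : EuclideanSpace ℝ (Fin n) → ℝ → EuclideanSpace ℝ (Fin n)) : ℝ :=
  (∫ t in Icc a b, (W1pNorm p Ω fun x => u x t) ^ q) ^ (1 / q)

/-- The supremum of density ratios over balls centred in `B_{1/4}` with radius in `(0,1/4]`. -/
def densRatioSup (μ : ℝ → Measure (EuclideanSpace ℝ (Fin n))) (t : ℝ) : ℝ :=
  ⨆ (y : EuclideanSpace ℝ (Fin n)) (_ : y ∈ closedBall (0 : EuclideanSpace ℝ (Fin n)) (1 / 4))
    (r : ℝ) (_ : r ∈ Ioc (0 : ℝ) (1 / 4)), (μ t (closedBall y r)).toReal / r ^ (n - 1)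

/-!
Let `f = φ` or `f = -φ` and write `A = {f ≥ b}`. Every segment from `A` to `{f ≤ a}` crosses the
slab `{a < f < b}`, so the integral of `|∇f|` over the part of the segment inside the slab is at
least `b - a`. Averaging over all pairs of points of a ball gives a relative isoperimetric
inequality in which `(b - a)⁻¹ ∫_{a < f < b} |∇f|` plays the role of the perimeter of `A`.

If `A` contains a ball of fixed radius about `x` and the slab is thin, then doubling the radius
until `A` stops filling half of the ball produces a radius `r` at which `r ^ (n - 1)`, hence the
`μ`-measure of the enlarged ball, is controlled by the slab part of `∫ |∇f|` in a comparable ball.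
A Vitali covering sums these estimates, and shrinking the slab yields
`μ {f > t} ≤ C K liminf_{h → 0} h⁻¹ ∫_{t - h < f < t} |∇f|`.

Integrating over `t > 0`, Fatou and Tonelli bound the right side by `C K ∫ |∇f|`; this weak
substitute for the coarea formula avoids any regularity theory for level sets. The layer cake
formula for `μ` then gives the estimate for the positive parts of `φ` and `-φ`.
-/

open Filter Topology

section LowerDensity

/-- The lower left density of a measure on the line at `t`. When `ρ` is the image under `f` of
the measure `|∇f| dν`, this number stands in for the perimeter of `{f > t}`. -/
def lowerLeftDensity (ρ : Measure ℝ) (t : ℝ) : ℝ≥0∞ :=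
  liminf (fun h => ρ (Ioo (t - h) t) / ENNReal.ofReal h) (𝓝[>] 0)

variable (ρ : Measure ℝ)

lemma preimage_prodMk_Ioo_sub (h s : ℝ) :
    (fun t : ℝ => (t, s)) ⁻¹' {p : ℝ × ℝ | p.2 ∈ Ioo (p.1 - h) p.1} = Ioo s (s + h) := by
  ext t
  simp only [mem_preimage, mem_ofPred_eq, mem_Ioo]
  constructor <;> rintro ⟨_, _⟩ <;> constructor <;> linarith

lemma measurableSet_setOf_mem_Ioo_sub (h : ℝ) :
    MeasurableSet {p : ℝ × ℝ | p.2 ∈ Ioo (p.1 - h) p.1} :=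
  (measurableSet_lt (measurable_fst.sub_const h) measurable_snd).inter
    (measurableSet_lt measurable_snd measurable_fst)

lemma measurable_measure_Ioo_sub [SFinite ρ] (h : ℝ) :
    Measurable fun t => ρ (Ioo (t - h) t) :=
  measurable_measure_prodMk_left (measurableSet_setOf_mem_Ioo_sub h)

lemma lintegral_measure_Ioo_sub [SFinite ρ] (h : ℝ) :
    ∫⁻ t, ρ (Ioo (t - h) t) = ENNReal.ofReal h * ρ univ := by
  have hS := measurableSet_setOf_mem_Ioo_sub h
  calc ∫⁻ t, ρ (Ioo (t - h) t)
      = (volume.prod ρ) {p : ℝ × ℝ | p.2 ∈ Ioo (p.1 - h) p.1} := (Measure.prod_apply hS).symm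
    _ = ∫⁻ s, volume (Ioo s (s + h)) ∂ρ := by
        simp only [Measure.prod_apply_symm hS, preimage_prodMk_Ioo_sub]
    _ = ENNReal.ofReal h * ρ univ := by
        simp only [Real.volume_Ioo, add_sub_cancel_left, lintegral_const]

lemma lintegral_lowerLeftDensity_le [SFinite ρ] :
    ∫⁻ t, lowerLeftDensity ρ t ≤ ρ univ := by
  have mean_le (h : ℝ) : ∫⁻ t, ρ (Ioo (t - h) t) / ENNReal.ofReal h ≤ ρ univ := by
    simp only [div_eq_mul_inv]
    rw [lintegral_mul_const _ (measurable_measure_Ioo_sub ρ h), lintegral_measure_Ioo_sub,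
      ← div_eq_mul_inv]
    exact ENNReal.div_le_of_le_mul' le_rfl
  calc ∫⁻ t, lowerLeftDensity ρ t
      ≤ liminf (fun h => ∫⁻ t, ρ (Ioo (t - h) t) / ENNReal.ofReal h) (𝓝[>] 0) :=
        lintegral_liminf_le fun h => (measurable_measure_Ioo_sub ρ h).div_const _
    _ ≤ ρ univ := (liminf_le_liminf (Eventually.of_forall mean_le)).trans (by simp)

lemma tendsto_measure_Ioo_sub_zero {t ε : ℝ} (hε : 0 < ε) (hfin : ρ (Ioo (t - ε) t) ≠ ∞) :
    Tendsto (fun h => ρ (Ioo (t - h) t)) (𝓝[>] 0) (𝓝 0) := by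
  have inter_eq_empty : ⋂ h > 0, Ioo (t - h) t = ∅ := by
    refine eq_empty_of_forall_notMem fun s hs => ?_
    simp only [mem_iInter, mem_Ioo] at hs
    have hst : s < t := (hs 1 one_pos).2
    linarith [(hs (t - s) (by linarith)).1]
  have := tendsto_measure_biInter_gt (μ := ρ) (s := fun h => Ioo (t - h) t) (a := 0)
    (fun _ _ => measurableSet_Ioo.nullMeasurableSet)
    (fun _ _ _ hij => Ioo_subset_Ioo_left (by linarith)) ⟨ε, hε, hfin⟩
  rwa [inter_eq_empty, measure_empty] at this

end LowerDensity

section Covering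

variable {X : Type*} [PseudoMetricSpace X] [SecondCountableTopology X] [MeasurableSpace X]
  [OpensMeasurableSpace X]

lemma measure_le_mul_of_forall_exists_closedBall {μ lam : Measure X} {S : Set X} {R : ℝ}
    {c : ℝ≥0∞}
    (hS : ∀ x ∈ S, ∃ r, 0 < r ∧ r ≤ R ∧ μ (closedBall x (5 * r)) ≤ c * lam (closedBall x r)) :
    μ S ≤ c * lam univ := by
  choose! r r_pos r_le μ_le using hS
  obtain ⟨u, u_sub, u_disj, u_cover⟩ :=
    Vitali.exists_disjoint_subfamily_covering_enlargement_closedBall S (fun x => x) r R r_le 5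
      (by norm_num)
  have u_countable : u.Countable := u_disj.countable_of_nonempty_interior fun x hx =>
    ⟨x, ball_subset_interior_closedBall (mem_ball_self (r_pos x (u_sub hx)))⟩
  calc μ S ≤ μ (⋃ x ∈ u, closedBall x (5 * r x)) := by
        refine measure_mono fun x hx => ?_
        obtain ⟨y, hy, hxy⟩ := u_cover x hx
        exact mem_biUnion hy (hxy (mem_closedBall_self (r_pos x hx).le))
    _ ≤ ∑' x : u, μ (closedBall (x : X) (5 * r x)) := measure_biUnion_le μ u_countable _
    _ ≤ ∑' x : u, c * lam (closedBall (x : X) (r x)) :=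
        ENNReal.tsum_le_tsum fun x => μ_le x (u_sub x.2)
    _ = c * lam (⋃ x ∈ u, closedBall x (r x)) := by
        rw [ENNReal.tsum_mul_left,
          measure_biUnion u_countable u_disj fun _ _ => isClosed_closedBall.measurableSet]
    _ ≤ c * lam univ := by gcongr; exact subset_univ _

end Covering

section Translation

lemma measure_mul_measure_eq_lintegral_translate {G : Type*} [AddGroup G] [MeasurableSpace G]
    [MeasurableAdd₂ G] (ν : Measure G) [SFinite ν] [ν.IsAddLeftInvariant] {A Z : Set G}
    (hA : MeasurableSet A) (hZ : MeasurableSet Z) :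
    ν A * ν Z = ∫⁻ w, ν (A ∩ (· + w) ⁻¹' Z) ∂ν := by
  have shear := measurePreserving_prod_add ν ν
  rw [← Measure.prod_prod, ← shear.measure_preimage (hA.prod hZ).nullMeasurableSet,
    Measure.prod_apply_symm (shear.measurable (hA.prod hZ))]
  rfl

lemma setLIntegral_closedBall_comp_add_le {G : Type*} [SeminormedAddCommGroup G]
    [MeasurableSpace G] [BorelSpace G] (ν : Measure G) [ν.IsAddRightInvariant] {g : G → ℝ≥0∞}
    (hg : Measurable g) (x v : G) (r : ℝ) :
    ∫⁻ y in closedBall x r, g (y + v) ∂ν ≤ ∫⁻ y in closedBall x (r + ‖v‖), g y ∂ν := by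
  calc ∫⁻ y in closedBall x r, g (y + v) ∂ν = ∫⁻ y in closedBall (x + v) r, g y ∂ν := by
        rw [← (measurePreserving_add_right ν v).setLIntegral_comp_preimage
          isClosed_closedBall.measurableSet hg, preimage_add_right_closedBall,
          add_sub_cancel_right]
    _ ≤ ∫⁻ y in closedBall x (r + ‖v‖), g y ∂ν :=
        lintegral_mono_set (closedBall_subset_closedBall' (by simp))

lemma closedBall_inter_preimage_add_right_eq_empty {G : Type*} [SeminormedAddCommGroup G] {x w : G}
    {r : ℝ} (hw : 2 * r < ‖w‖) : closedBall x r ∩ (· + w) ⁻¹' closedBall x r = ∅ := by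
  refine eq_empty_of_forall_notMem fun y ⟨(hy : dist y x ≤ r), (hyw : dist (y + w) x ≤ r)⟩ => ?_
  have := dist_triangle_right (y + w) y x
  rw [dist_self_add_left] at this
  linarith

end Translation

section Segment

lemma ofReal_sub_le_setLIntegral_enorm_deriv {γ : ℝ → ℝ} (hγ : Differentiable ℝ γ) {a b p q : ℝ}
    (hpq : p ≤ q) (hp : b ≤ γ p) (hq : γ q ≤ a) :
    ENNReal.ofReal (b - a) ≤ ∫⁻ s in Icc p q ∩ γ ⁻¹' Ioo a b, ‖deriv γ s‖ₑ := by
  have slab_subset_image : Ioo a b ⊆ γ '' (Icc p q ∩ γ ⁻¹' Ioo a b) := fun u hu => by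
    obtain ⟨s, hs, rfl⟩ := intermediate_value_Icc' hpq hγ.continuous.continuousOn
      ⟨hq.trans hu.1.le, hu.2.le.trans hp⟩
    exact ⟨s, ⟨hs, hu⟩, rfl⟩
  calc ENNReal.ofReal (b - a) = volume (Ioo a b) := Real.volume_Ioo.symm
    _ ≤ volume (γ '' (Icc p q ∩ γ ⁻¹' Ioo a b)) := measure_mono slab_subset_image
    _ ≤ ∫⁻ s in Icc p q ∩ γ ⁻¹' Ioo a b, ENNReal.ofReal |(fderiv ℝ γ s).det| :=
        addHaar_image_le_lintegral_abs_det_fderiv volume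
          (measurableSet_Icc.inter (hγ.continuous.measurable measurableSet_Ioo))
          fun s _ => (hγ s).hasFDerivAt.hasFDerivWithinAt
    _ = ∫⁻ s in Icc p q ∩ γ ⁻¹' Ioo a b, ‖deriv γ s‖ₑ := by
        simp only [← toSpanSingleton_deriv, ContinuousLinearMap.det_toSpanSingleton,
          ← Real.norm_eq_abs, ofReal_norm]

variable {E : Type*} [NormedAddCommGroup E] [NormedSpace ℝ E]

lemma enorm_deriv_comp_segment_le {f : E → ℝ} (hf : Differentiable ℝ f) (y w : E) (s : ℝ) :
    ‖deriv (fun s : ℝ => f (y + s • w)) s‖ₑ ≤ ‖w‖ₑ * ‖fderiv ℝ f (y + s • w)‖ₑ := by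
  have segment_deriv : HasDerivAt (fun s : ℝ => y + s • w) w s := by
    simpa using ((hasDerivAt_id s).smul_const w).const_add y
  have comp_deriv : HasDerivAt (fun s : ℝ => f (y + s • w)) (fderiv ℝ f (y + s • w) w) s :=
    (hf _).hasFDerivAt.comp_hasDerivAt s segment_deriv
  rw [comp_deriv.deriv, mul_comm]
  exact ContinuousLinearMap.le_opENorm _ _

lemma ofReal_sub_le_lintegral_fderiv_segment {f : E → ℝ} (hf : Differentiable ℝ f) {a b : ℝ}
    {y w : E} (hy : b ≤ f y) (hyw : f (y + w) ≤ a) :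
    ENNReal.ofReal (b - a) ≤ ‖w‖ₑ *
      ∫⁻ s in Icc (0 : ℝ) 1, (f ⁻¹' Ioo a b).indicator (‖fderiv ℝ f ·‖ₑ) (y + s • w) := by
  set γ : ℝ → ℝ := fun s => f (y + s • w)
  have hγ : Differentiable ℝ γ := by fun_prop
  have slab_meas : MeasurableSet (γ ⁻¹' Ioo a b) := hγ.continuous.measurable measurableSet_Ioo
  calc ENNReal.ofReal (b - a) ≤ ∫⁻ s in Icc 0 1 ∩ γ ⁻¹' Ioo a b, ‖deriv γ s‖ₑ :=
        ofReal_sub_le_setLIntegral_enorm_deriv hγ zero_le_one (by simpa [γ]) (by simpa [γ])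
    _ = ∫⁻ s in Icc 0 1, (γ ⁻¹' Ioo a b).indicator (‖deriv γ ·‖ₑ) s := by
        rw [setLIntegral_indicator slab_meas, inter_comm]
    _ ≤ ∫⁻ s in Icc (0 : ℝ) 1,
          ‖w‖ₑ * (f ⁻¹' Ioo a b).indicator (‖fderiv ℝ f ·‖ₑ) (y + s • w) := by
        refine lintegral_mono fun s => ?_
        by_cases hs : f (y + s • w) ∈ Ioo a b
        · rw [indicator_of_mem (by exact hs), indicator_of_mem (by exact hs)]
          exact enorm_deriv_comp_segment_le hf y w s
        · rw [indicator_of_notMem (by exact hs)]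
          exact zero_le
    _ = _ := lintegral_const_mul' _ _ enorm_ne_top

end Segment

lemma measure_le_four_mul_measure_inter_le {α : Type*} [MeasurableSpace α] {ν : Measure α}
    {f : α → ℝ} {a b : ℝ} {B : Set α} (hB : ν B ≠ ∞) (hupper : 2 * ν (B ∩ {y | b ≤ f y}) ≤ ν B)
    (hslab : 4 * ν (f ⁻¹' Ioo a b) ≤ ν B) :
    ν B ≤ 4 * ν (B ∩ {y | f y ≤ a}) := by
  have cover : B ⊆ (B ∩ {y | b ≤ f y}) ∪ (B ∩ {y | f y ≤ a}) ∪ f ⁻¹' Ioo a b := fun y hy => by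
    simp only [mem_union, mem_inter_iff, mem_ofPred_eq, mem_preimage, mem_Ioo]
    grind
  have : 3 * ν B + ν B ≤ 3 * ν B + 4 * ν (B ∩ {y | f y ≤ a}) := by
    calc 3 * ν B + ν B = 4 * ν B := by ring
      _ ≤ 4 * (ν (B ∩ {y | b ≤ f y}) + ν (B ∩ {y | f y ≤ a}) + ν (f ⁻¹' Ioo a b)) := by
          gcongr
          exact (measure_mono cover).trans
            ((measure_union_le _ _).trans (add_le_add_left (measure_union_le _ _) _))
      _ = 2 * (2 * ν (B ∩ {y | b ≤ f y})) + 4 * ν (B ∩ {y | f y ≤ a})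
            + 4 * ν (f ⁻¹' Ioo a b) := by ring
      _ ≤ 2 * ν B + 4 * ν (B ∩ {y | f y ≤ a}) + ν B := by gcongr
      _ = 3 * ν B + 4 * ν (B ∩ {y | f y ≤ a}) := by ring
  exact (ENNReal.add_le_add_iff_left (ENNReal.mul_ne_top ENNReal.ofNat_ne_top hB)).1 this

section Haar

variable {E : Type*} [NormedAddCommGroup E] [NormedSpace ℝ E] [MeasurableSpace E]
  (ν : Measure E)

/-- The growth condition `μ(B_r(x)) ≤ K r^k` for all centres `x` and all radii `r > 0`, that is,
upper Ahlfors `k`-regularity with constant `K`. -/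
def HasBallGrowth {X : Type*} [PseudoMetricSpace X] [MeasurableSpace X] (μ : Measure X)
    (K : ℝ≥0) (k : ℕ) : Prop :=
  ∀ (x : X) (r : ℝ), 0 < r → μ (closedBall x r) ≤ K * ENNReal.ofReal r ^ k

/-- The constant of the boxing inequality. The powers of `4` come from the isoperimetric estimate
in the critical ball, and those of `15` from the fivefold Vitali enlargement of balls whose radius
was tripled by that estimate. -/
def boxingConst : ℝ≥0∞ :=
  15 ^ (Module.finrank ℝ E - 1) * 4 ^ (Module.finrank ℝ E + 2) / ν (ball 0 1)

lemma boxingConst_ne_zero [FiniteDimensional ℝ E] [ν.IsAddHaarMeasure] : boxingConst ν ≠ 0 :=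
  (ENNReal.div_pos (by positivity) measure_ball_lt_top.ne).ne'

lemma boxingConst_ne_top [ν.IsAddHaarMeasure] : boxingConst ν ≠ ∞ :=
  ENNReal.div_ne_top (by finiteness) (measure_ball_pos ν 0 one_pos).ne'

variable {ν} in
lemma HasBallGrowth.measure_closedBall_le_boxingConst [FiniteDimensional ℝ E]
    [ν.IsAddHaarMeasure] {μ : Measure E} {K : ℝ≥0}
    (hμ : HasBallGrowth μ K (Module.finrank ℝ E - 1)) (x : E) {r : ℝ} (hr : 0 < r)
    {h I : ℝ≥0∞} (h_ne_zero : h ≠ 0) (h_ne_top : h ≠ ∞)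
    (hI : h * (ν (ball 0 1) * ENNReal.ofReal r ^ (Module.finrank ℝ E - 1)) ≤
      4 ^ (Module.finrank ℝ E + 2) * I) :
    μ (closedBall x (5 * (3 * r))) ≤ boxingConst ν * K / h * I := by
  set d := Module.finrank ℝ E
  set ω := ν (ball (0 : E) 1)
  have ω_ne_zero : ω ≠ 0 := (measure_ball_pos ν 0 one_pos).ne'
  have ω_ne_top : ω ≠ ∞ := measure_ball_lt_top.ne
  have r_pow_le : ENNReal.ofReal r ^ (d - 1) ≤ 4 ^ (d + 2) * I / (h * ω) := by
    rwa [ENNReal.le_div_iff_mul_le (.inl (mul_ne_zero h_ne_zero ω_ne_zero))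
      (.inl (ENNReal.mul_ne_top h_ne_top ω_ne_top)), mul_comm, mul_assoc]
  calc μ (closedBall x (5 * (3 * r))) ≤ K * ENNReal.ofReal (5 * (3 * r)) ^ (d - 1) :=
        hμ x _ (by positivity)
    _ = K * 15 ^ (d - 1) * ENNReal.ofReal r ^ (d - 1) := by
        rw [show 5 * (3 * r) = 15 * r by ring, ENNReal.ofReal_mul (by norm_num),
          ENNReal.ofReal_ofNat, mul_pow, mul_assoc]
    _ ≤ K * 15 ^ (d - 1) * (4 ^ (d + 2) * I / (h * ω)) := by gcongr
    _ = boxingConst ν * K / h * I := by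
        simp only [boxingConst, div_eq_mul_inv,
          ENNReal.mul_inv (.inl h_ne_zero) (.inl h_ne_top)]
        ring

/-- The measure `|∇f| dν`, with the gradient measured in the dual norm. -/
def gradMeasure (f : E → ℝ) : Measure E :=
  ν.withDensity (‖fderiv ℝ f ·‖ₑ)

variable [BorelSpace E]

lemma gradMeasure_closedBall_inter {f : E → ℝ} {T : Set E} (hT : MeasurableSet T) (x : E)
    (r : ℝ) :
    gradMeasure ν f (closedBall x r ∩ T) =
      ∫⁻ y in closedBall x r, T.indicator (‖fderiv ℝ f ·‖ₑ) y ∂ν := by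
  rw [gradMeasure, withDensity_apply _ (isClosed_closedBall.measurableSet.inter hT),
    setLIntegral_indicator hT, inter_comm]

variable [FiniteDimensional ℝ E] [ν.IsAddHaarMeasure]

lemma ofReal_sub_mul_measure_translate_le {f : E → ℝ} (hf : Differentiable ℝ f) (a b : ℝ)
    (x w : E) (r : ℝ) :
    ENNReal.ofReal (b - a) * ν {y ∈ closedBall x r | b ≤ f y ∧ f (y + w) ≤ a} ≤
      ‖w‖ₑ * gradMeasure ν f (closedBall x (r + ‖w‖) ∩ f ⁻¹' Ioo a b) := by
  have slab_meas : MeasurableSet (f ⁻¹' Ioo a b) := hf.continuous.measurable measurableSet_Ioo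
  set g : E → ℝ≥0∞ := (f ⁻¹' Ioo a b).indicator (‖fderiv ℝ f ·‖ₑ)
  have hg : Measurable g := (measurable_fderiv ℝ f).enorm.indicator slab_meas
  have hg_segment : Measurable fun p : E × ℝ => g (p.1 + p.2 • w) := by fun_prop
  rw [gradMeasure_closedBall_inter ν slab_meas]
  calc ENNReal.ofReal (b - a) * ν {y ∈ closedBall x r | b ≤ f y ∧ f (y + w) ≤ a}
      = ∫⁻ _ in {y ∈ closedBall x r | b ≤ f y ∧ f (y + w) ≤ a}, ENNReal.ofReal (b - a) ∂ν :=
        (setLIntegral_const _ _).symm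
    _ ≤ ∫⁻ y in {y ∈ closedBall x r | b ≤ f y ∧ f (y + w) ≤ a},
          (‖w‖ₑ * ∫⁻ s in Icc (0 : ℝ) 1, g (y + s • w)) ∂ν :=
        setLIntegral_mono (hg_segment.lintegral_prod_right'.const_mul _) fun y hy =>
          ofReal_sub_le_lintegral_fderiv_segment hf hy.2.1 hy.2.2
    _ ≤ ∫⁻ y in closedBall x r, (‖w‖ₑ * ∫⁻ s in Icc (0 : ℝ) 1, g (y + s • w)) ∂ν :=
        lintegral_mono_set (sep_subset _ _)
    _ = ‖w‖ₑ * ∫⁻ s in Icc (0 : ℝ) 1, ∫⁻ y in closedBall x r, g (y + s • w) ∂ν := by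
        rw [lintegral_const_mul' _ _ enorm_ne_top,
          lintegral_lintegral_swap hg_segment.aemeasurable]
    _ ≤ ‖w‖ₑ * ∫⁻ _ in Icc (0 : ℝ) 1, ∫⁻ y in closedBall x (r + ‖w‖), g y ∂ν := by
        gcongr ‖w‖ₑ * ?_
        refine setLIntegral_mono measurable_const fun s hs => ?_
        refine (setLIntegral_closedBall_comp_add_le ν hg x (s • w) r).trans
          (lintegral_mono_set (closedBall_subset_closedBall ?_))
        rw [norm_smul, Real.norm_of_nonneg hs.1]
        gcongr
        exact mul_le_of_le_one_left (norm_nonneg w) hs.2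
    _ = ‖w‖ₑ * ∫⁻ y in closedBall x (r + ‖w‖), g y ∂ν := by simp

lemma ofReal_sub_mul_measure_mul_measure_le {f : E → ℝ} (hf : Differentiable ℝ f) (a b : ℝ)
    (x : E) (r : ℝ) :
    ENNReal.ofReal (b - a) * (ν (closedBall x r ∩ {y | b ≤ f y}) *
        ν (closedBall x r ∩ {y | f y ≤ a})) ≤
      ENNReal.ofReal (2 * r) * gradMeasure ν f (closedBall x (3 * r) ∩ f ⁻¹' Ioo a b) *
        ν (closedBall x (2 * r)) := by
  set A := closedBall x r ∩ {y | b ≤ f y}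
  set Z := closedBall x r ∩ {y | f y ≤ a}
  have hA : MeasurableSet A := isClosed_closedBall.measurableSet.inter
    (measurableSet_le measurable_const hf.continuous.measurable)
  have hZ : MeasurableSet Z := isClosed_closedBall.measurableSet.inter
    (measurableSet_le hf.continuous.measurable measurable_const)
  set I := ENNReal.ofReal (2 * r) * gradMeasure ν f (closedBall x (3 * r) ∩ f ⁻¹' Ioo a b)
  have translate_le (w : E) : ENNReal.ofReal (b - a) * ν (A ∩ (· + w) ⁻¹' Z) ≤
      (closedBall 0 (2 * r)).indicator (fun _ => I) w := by
    by_cases hw : w ∈ closedBall 0 (2 * r)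
    · rw [indicator_of_mem hw]
      rw [mem_closedBall_zero_iff] at hw
      calc ENNReal.ofReal (b - a) * ν (A ∩ (· + w) ⁻¹' Z)
          ≤ ENNReal.ofReal (b - a) * ν {y ∈ closedBall x r | b ≤ f y ∧ f (y + w) ≤ a} := by
            gcongr
            exact fun y hy => ⟨hy.1.1, hy.1.2, hy.2.2⟩
        _ ≤ ‖w‖ₑ * gradMeasure ν f (closedBall x (r + ‖w‖) ∩ f ⁻¹' Ioo a b) :=
            ofReal_sub_mul_measure_translate_le ν hf a b x w r
        _ ≤ I := by
            rw [← ofReal_norm]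
            unfold I
            gcongr ENNReal.ofReal ?_ * gradMeasure ν f (closedBall x ?_ ∩ _)
            linarith
    · have disjoint_translate : A ∩ (· + w) ⁻¹' Z = ∅ := subset_empty_iff.1 <|
        (inter_subset_inter inter_subset_left (preimage_mono inter_subset_left)).trans
          (closedBall_inter_preimage_add_right_eq_empty (by simpa using hw)).subset
      simp [disjoint_translate]
  calc ENNReal.ofReal (b - a) * (ν A * ν Z)
      = ∫⁻ w, ENNReal.ofReal (b - a) * ν (A ∩ (· + w) ⁻¹' Z) ∂ν := by
        rw [measure_mul_measure_eq_lintegral_translate ν hA hZ,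
          lintegral_const_mul' _ _ ENNReal.ofReal_ne_top]
    _ ≤ ∫⁻ w, (closedBall 0 (2 * r)).indicator (fun _ => I) w ∂ν := lintegral_mono translate_le
    _ = I * ν (closedBall x (2 * r)) := by
        rw [lintegral_indicator isClosed_closedBall.measurableSet, setLIntegral_const,
          ν.addHaar_closedBall_center x]

lemma addHaar_closedBall_two_mul (x : E) {r : ℝ} (hr : 0 ≤ r) :
    ν (closedBall x (2 * r)) = 2 ^ Module.finrank ℝ E * ν (closedBall x r) := by
  rw [ν.addHaar_closedBall_mul x zero_le_two hr, ν.addHaar_closedBall_center x r,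
    ENNReal.ofReal_pow zero_le_two, ENNReal.ofReal_ofNat]

variable [Nontrivial E]

lemma addHaar_closedBall_eq_mul_pow_pred (x : E) {r : ℝ} (hr : 0 ≤ r) :
    ν (closedBall x r) =
      ENNReal.ofReal r * (ν (ball 0 1) * ENNReal.ofReal r ^ (Module.finrank ℝ E - 1)) := by
  rw [ν.addHaar_closedBall x hr, ENNReal.ofReal_pow hr, mul_left_comm,
    mul_pow_sub_one Module.finrank_pos.ne', mul_comm]

lemma exists_forall_lt_measure_closedBall {c : ℝ≥0∞} (hc : c ≠ ∞) :
    ∃ R : ℝ, ∀ x, c < ν (closedBall x R) := by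
  have unbounded : ⨆ k : ℕ, ν (closedBall 0 k) = ∞ := by
    have balls_mono : Monotone fun k : ℕ => closedBall (0 : E) k :=
      fun _ _ hkl => closedBall_subset_closedBall (by exact_mod_cast hkl)
    rw [← balls_mono.measure_iUnion, iUnion_closedBall_nat, measure_univ_of_isAddLeftInvariant]
  obtain ⟨k, hk⟩ := lt_iSup_iff.1 (unbounded ▸ hc.lt_top)
  exact ⟨k, fun x => by rwa [ν.addHaar_closedBall_center]⟩

lemma exists_radius_half_measure_inter {A : Set E} {r₀ : ℝ} (hr₀ : 0 < r₀) (hA : ν A ≠ ∞) {x : E}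
    (hx : closedBall x r₀ ⊆ A) :
    ∃ ρ ≥ r₀, ν (closedBall x ρ) ≤ 2 * ν (closedBall x ρ ∩ A) ∧
      2 * ν (closedBall x (2 * ρ) ∩ A) ≤ ν (closedBall x (2 * ρ)) := by
  classical
  have eventually_small : ∃ k : ℕ,
      2 * ν (closedBall x (2 ^ k * r₀) ∩ A) < ν (closedBall x (2 ^ k * r₀)) := by
    obtain ⟨R, hR⟩ :=
      exists_forall_lt_measure_closedBall ν (by finiteness : (2 : ℝ≥0∞) * ν A ≠ ∞)
    obtain ⟨k, hk⟩ := pow_unbounded_of_one_lt (R / r₀) one_lt_two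
    rw [div_lt_iff₀ hr₀] at hk
    refine ⟨k, ?_⟩
    calc 2 * ν (closedBall x (2 ^ k * r₀) ∩ A) ≤ 2 * ν A := by gcongr; exact inter_subset_right
      _ < ν (closedBall x R) := hR x
      _ ≤ ν (closedBall x (2 ^ k * r₀)) := by gcongr
  have start_large : Nat.find eventually_small ≠ 0 := fun h => by
    have := Nat.find_spec eventually_small
    rw [h, pow_zero, one_mul, inter_eq_self_of_subset_left hx] at this
    exact this.not_ge (le_mul_of_one_le_left zero_le one_le_two)
  obtain ⟨k, hk⟩ := Nat.exists_eq_succ_of_ne_zero start_large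
  refine ⟨2 ^ k * r₀, le_mul_of_one_le_left hr₀.le (one_le_pow₀ one_le_two), ?_, ?_⟩
  · exact not_lt.1 (Nat.find_min eventually_small (by omega))
  · rw [← mul_assoc, ← pow_succ', ← Nat.succ_eq_add_one, ← hk]
    exact (Nat.find_spec eventually_small).le

lemma relative_isoperimetric_slab {f : E → ℝ} (hf : Differentiable ℝ f) {a b : ℝ} {x : E}
    {r : ℝ} (hr : 0 < r) {α β : ℝ≥0∞}
    (hα : ν (closedBall x r) ≤ α * ν (closedBall x r ∩ {y | b ≤ f y}))
    (hβ : ν (closedBall x r) ≤ β * ν (closedBall x r ∩ {y | f y ≤ a})) :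
    ENNReal.ofReal (b - a) * (ν (ball 0 1) * ENNReal.ofReal r ^ (Module.finrank ℝ E - 1)) ≤
      α * β * 2 ^ (Module.finrank ℝ E + 1) *
        gradMeasure ν f (closedBall x (3 * r) ∩ f ⁻¹' Ioo a b) := by
  set B := closedBall x r
  set A := B ∩ {y | b ≤ f y}
  set Z := B ∩ {y | f y ≤ a}
  set I := gradMeasure ν f (closedBall x (3 * r) ∩ f ⁻¹' Ioo a b)
  set P := ν (ball (0 : E) 1) * ENNReal.ofReal r ^ (Module.finrank ℝ E - 1)
  have scaled : ν B * ENNReal.ofReal r * (ENNReal.ofReal (b - a) * P) ≤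
      ν B * ENNReal.ofReal r * (α * β * 2 ^ (Module.finrank ℝ E + 1) * I) := by
    calc ν B * ENNReal.ofReal r * (ENNReal.ofReal (b - a) * P)
        = ENNReal.ofReal (b - a) * (ν B * ν B) := by
          nth_rewrite 3 [addHaar_closedBall_eq_mul_pow_pred ν x hr.le]
          ring
      _ ≤ ENNReal.ofReal (b - a) * ((α * ν A) * (β * ν Z)) := by gcongr
      _ = α * β * (ENNReal.ofReal (b - a) * (ν A * ν Z)) := by ring
      _ ≤ α * β * (ENNReal.ofReal (2 * r) * I * ν (closedBall x (2 * r))) :=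
          mul_le_mul_right (ofReal_sub_mul_measure_mul_measure_le ν hf a b x r) _
      _ = ν B * ENNReal.ofReal r * (α * β * 2 ^ (Module.finrank ℝ E + 1) * I) := by
          rw [addHaar_closedBall_two_mul ν x hr.le, ENNReal.ofReal_mul zero_le_two,
            ENNReal.ofReal_ofNat]
          ring
  exact (ENNReal.mul_le_mul_iff_right
    (mul_ne_zero (measure_closedBall_pos ν x hr).ne' (by simpa using hr))
    (ENNReal.mul_ne_top measure_closedBall_lt_top.ne ENNReal.ofReal_ne_top)).1 scaled

lemma exists_radius_pow_le_gradMeasure {f : E → ℝ} (hf : Differentiable ℝ f) {a b r₀ : ℝ}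
    (hr₀ : 0 < r₀) (hfin : ν {y | b ≤ f y} ≠ ∞)
    (hslab : 4 * ν (f ⁻¹' Ioo a b) ≤ ν (closedBall 0 r₀)) {x : E}
    (hx : closedBall x r₀ ⊆ {y | b ≤ f y}) :
    ∃ r > 0, ν (closedBall x r) ≤ 2 ^ (Module.finrank ℝ E + 1) * ν {y | b ≤ f y} ∧
      ENNReal.ofReal (b - a) * (ν (ball 0 1) * ENNReal.ofReal r ^ (Module.finrank ℝ E - 1)) ≤
        4 ^ (Module.finrank ℝ E + 2) *
          gradMeasure ν f (closedBall x (3 * r) ∩ f ⁻¹' Ioo a b) := by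
  obtain ⟨ρ, hρ, large, small⟩ := exists_radius_half_measure_inter ν hr₀ hfin hx
  have hρ_pos : 0 < ρ := hr₀.trans_le hρ
  have upper_part : ν (closedBall x (2 * ρ)) ≤
      2 ^ (Module.finrank ℝ E + 1) * ν (closedBall x (2 * ρ) ∩ {y | b ≤ f y}) := by
    rw [addHaar_closedBall_two_mul ν x hρ_pos.le, pow_succ, mul_assoc]
    gcongr _ * ?_
    refine large.trans ?_
    gcongr
    linarith
  have lower_part : ν (closedBall x (2 * ρ)) ≤
      4 * ν (closedBall x (2 * ρ) ∩ {y | f y ≤ a}) := by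
    refine measure_le_four_mul_measure_inter_le measure_closedBall_lt_top.ne small
      (hslab.trans ?_)
    rw [ν.addHaar_closedBall_center x]
    gcongr
    linarith
  refine ⟨2 * ρ, by positivity, upper_part.trans (by gcongr; exact inter_subset_right), ?_⟩
  convert relative_isoperimetric_slab ν hf (by positivity) upper_part lower_part using 2
  rw [show (4 : ℝ≥0∞) = 2 * 2 by norm_num, mul_pow]
  ring

variable {ν} {μ : Measure E} {K : ℝ≥0}

lemma HasBallGrowth.boxing_slab (hμ : HasBallGrowth μ K (Module.finrank ℝ E - 1)) {f : E → ℝ}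
    (hf : Differentiable ℝ f) {a b r₀ : ℝ} (hab : a < b) (hr₀ : 0 < r₀)
    (hfin : ν {y | b ≤ f y} ≠ ∞) (hslab : 4 * ν (f ⁻¹' Ioo a b) ≤ ν (closedBall 0 r₀)) :
    μ {x | closedBall x r₀ ⊆ {y | b ≤ f y}} ≤
      boxingConst ν * K / ENNReal.ofReal (b - a) * gradMeasure ν f (f ⁻¹' Ioo a b) := by
  obtain ⟨R, hR⟩ := exists_forall_lt_measure_closedBall ν
    (by finiteness : 2 ^ (Module.finrank ℝ E + 1) * ν {y | b ≤ f y} ≠ ∞)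
  rw [← Measure.restrict_apply_univ (μ := gradMeasure ν f)]
  refine measure_le_mul_of_forall_exists_closedBall (R := 3 * R) fun x hx => ?_
  obtain ⟨r, r_pos, r_small, r_pow_le⟩ :=
    exists_radius_pow_le_gradMeasure ν hf hr₀ hfin hslab hx
  have r_lt : r < R := by
    by_contra! hle
    exact (hR x).not_ge ((measure_mono (closedBall_subset_closedBall hle)).trans r_small)
  refine ⟨3 * r, by positivity, by linarith, ?_⟩
  rw [Measure.restrict_apply isClosed_closedBall.measurableSet]
  exact hμ.measure_closedBall_le_boxingConst x r_pos (by simpa using hab)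
    ENNReal.ofReal_ne_top r_pow_le

lemma setOf_lt_subset_iUnion_closedBall_subset {X : Type*} [PseudoMetricSpace X] {f : X → ℝ}
    (hf : Continuous f) (t : ℝ) :
    {x | t < f x} ⊆ ⋃ m : ℕ, {x | closedBall x (1 / (m + 1)) ⊆ {y | t ≤ f y}} := fun x hx => by
  have upper_nhds : {y | t ≤ f y} ∈ 𝓝 x := hf.continuousAt.eventually (Ici_mem_nhds hx)
  obtain ⟨m, -, hm⟩ := nhds_basis_closedBall_inv_nat_succ.mem_iff.1 upper_nhds
  exact mem_iUnion.2 ⟨m, hm⟩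

lemma HasBallGrowth.measure_setOf_closedBall_subset_le_lowerLeftDensity
    (hμ : HasBallGrowth μ K (Module.finrank ℝ E - 1)) {f : E → ℝ} (hf : Differentiable ℝ f)
    (hfin : ∀ s > 0, ν {x | s ≤ f x} ≠ ∞) {t r : ℝ} (ht : 0 < t) (hr : 0 < r) :
    μ {x | closedBall x r ⊆ {y | t ≤ f y}} ≤
      boxingConst ν * K * lowerLeftDensity ((gradMeasure ν f).map f) t := by
  have hf_meas := hf.continuous.measurable
  have slab_fin : ν.map f (Ioo (t - t / 2) t) ≠ ∞ := by
    rw [Measure.map_apply hf_meas measurableSet_Ioo]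
    exact measure_ne_top_of_subset (preimage_mono fun s hs => by grind : _ ⊆ f ⁻¹' Ici (t / 2))
      (hfin _ (half_pos ht))
  have slab_small : ∀ᶠ h in 𝓝[>] 0, 4 * ν (f ⁻¹' Ioo (t - h) t) ≤ ν (closedBall 0 r) := by
    have := ENNReal.Tendsto.const_mul (a := 4)
      (tendsto_measure_Ioo_sub_zero (ν.map f) (half_pos ht) slab_fin) (.inr (by norm_num))
    rw [mul_zero] at this
    filter_upwards [this.eventually_lt_const (measure_closedBall_pos ν 0 hr)] with h hh
    rw [Measure.map_apply hf_meas measurableSet_Ioo] at hh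
    exact hh.le
  rw [lowerLeftDensity, ← ENNReal.liminf_const_mul_of_ne_top
    (ENNReal.mul_ne_top (boxingConst_ne_top ν) ENNReal.coe_ne_top)]
  refine le_liminf_of_le (by isBoundedDefault) ?_
  filter_upwards [slab_small, self_mem_nhdsWithin] with h hslab (h_pos : 0 < h)
  have := hμ.boxing_slab hf (by linarith : t - h < t) hr (hfin t ht) hslab
  rwa [sub_sub_cancel, ← ENNReal.mul_div_right_comm, mul_div_assoc,
    ← Measure.map_apply hf_meas measurableSet_Ioo] at this

lemma HasBallGrowth.measure_lt_le_lowerLeftDensity (hμ : HasBallGrowth μ K (Module.finrank ℝ E - 1))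
    {f : E → ℝ} (hf : Differentiable ℝ f) (hfin : ∀ s > 0, ν {x | s ≤ f x} ≠ ∞) {t : ℝ}
    (ht : 0 < t) :
    μ {x | t < f x} ≤ boxingConst ν * K * lowerLeftDensity ((gradMeasure ν f).map f) t := by
  have mono : Monotone fun m : ℕ =>
      {x | closedBall x (1 / ((m : ℝ) + 1)) ⊆ {y | t ≤ f y}} := fun k m hkm x hx =>
    (closedBall_subset_closedBall (Nat.one_div_le_one_div hkm)).trans hx
  refine (measure_mono (setOf_lt_subset_iUnion_closedBall_subset hf.continuous t)).trans ?_
  rw [mono.measure_iUnion]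
  exact iSup_le fun m =>
    hμ.measure_setOf_closedBall_subset_le_lowerLeftDensity hf hfin ht (by positivity)

lemma HasBallGrowth.lintegral_ofReal_le_lintegral_enorm_fderiv
    (hμ : HasBallGrowth μ K (Module.finrank ℝ E - 1)) {f : E → ℝ} (hf : Differentiable ℝ f)
    (hfin : ∀ s > 0, ν {x | s ≤ f x} ≠ ∞) :
    ∫⁻ x, ENNReal.ofReal (f x) ∂μ ≤ boxingConst ν * K * ∫⁻ x, ‖fderiv ℝ f x‖ₑ ∂ν := by
  calc ∫⁻ x, ENNReal.ofReal (f x) ∂μ = ∫⁻ x, ENNReal.ofReal (max (f x) 0) ∂μ := by simp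
    _ = ∫⁻ t in Ioi 0, μ {x | t < max (f x) 0} :=
        lintegral_eq_lintegral_meas_lt μ (.of_forall fun _ => le_max_right _ _)
          (hf.continuous.max continuous_const).measurable.aemeasurable
    _ ≤ ∫⁻ t in Ioi 0, boxingConst ν * K * lowerLeftDensity ((gradMeasure ν f).map f) t := by
        refine setLIntegral_mono' measurableSet_Ioi fun t (ht : 0 < t) => ?_
        simpa only [lt_max_iff, ht.not_gt, or_false]
          using hμ.measure_lt_le_lowerLeftDensity hf hfin ht
    _ ≤ ∫⁻ t, boxingConst ν * K * lowerLeftDensity ((gradMeasure ν f).map f) t :=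
        setLIntegral_le_lintegral _ _
    _ = boxingConst ν * K * ∫⁻ t, lowerLeftDensity ((gradMeasure ν f).map f) t :=
        lintegral_const_mul' _ _ (ENNReal.mul_ne_top (boxingConst_ne_top ν) ENNReal.coe_ne_top)
    _ ≤ boxingConst ν * K * (gradMeasure ν f).map f univ := by
        gcongr
        have : SFinite (gradMeasure ν f) := by unfold gradMeasure; infer_instance
        exact lintegral_lowerLeftDensity_le _
    _ = boxingConst ν * K * ∫⁻ x, ‖fderiv ℝ f x‖ₑ ∂ν := by
        rw [Measure.map_apply hf.continuous.measurable .univ, preimage_univ, gradMeasure,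
          withDensity_apply _ .univ, setLIntegral_univ]

lemma HasBallGrowth.lintegral_enorm_le_lintegral_enorm_fderiv
    (hμ : HasBallGrowth μ K (Module.finrank ℝ E - 1)) {f : E → ℝ} (hf : Differentiable ℝ f)
    (hfin : ∀ s > 0, ν {x | s ≤ |f x|} ≠ ∞) :
    ∫⁻ x, ‖f x‖ₑ ∂μ ≤ 2 * boxingConst ν * K * ∫⁻ x, ‖fderiv ℝ f x‖ₑ ∂ν := by
  have pos_part := hμ.lintegral_ofReal_le_lintegral_enorm_fderiv hf fun s hs =>
    measure_ne_top_of_subset (fun x (hx : s ≤ f x) => hx.trans (le_abs_self _)) (hfin s hs)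
  have neg_part := hμ.lintegral_ofReal_le_lintegral_enorm_fderiv hf.neg fun s hs =>
    measure_ne_top_of_subset (fun x (hx : s ≤ -f x) => hx.trans (neg_le_abs _)) (hfin s hs)
  simp only [Pi.neg_apply, fderiv_neg, enorm_neg] at neg_part
  calc ∫⁻ x, ‖f x‖ₑ ∂μ
      ≤ ∫⁻ x, (ENNReal.ofReal (f x) + ENNReal.ofReal (-f x)) ∂μ := by
        refine lintegral_mono fun x => ?_
        rcases le_total 0 (f x) with hx | hx
        · rw [Real.enorm_of_nonneg hx]
          exact le_self_add
        · rw [← enorm_neg, Real.enorm_of_nonneg (neg_nonneg.2 hx)]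
          exact le_add_self
    _ = ∫⁻ x, ENNReal.ofReal (f x) ∂μ + ∫⁻ x, ENNReal.ofReal (-f x) ∂μ :=
        lintegral_add_left hf.continuous.measurable.ennreal_ofReal _
    _ ≤ boxingConst ν * K * ∫⁻ x, ‖fderiv ℝ f x‖ₑ ∂ν +
          boxingConst ν * K * ∫⁻ x, ‖fderiv ℝ f x‖ₑ ∂ν := add_le_add pos_part neg_part
    _ = 2 * boxingConst ν * K * ∫⁻ x, ‖fderiv ℝ f x‖ₑ ∂ν := by ring

variable (ν) in
theorem statement8_general :
    ∃ c > (0 : ℝ), ∀ (μ : Measure E) (K : ℝ), 0 ≤ K →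
      (∀ (x : E) (r : ℝ), 0 < r →
        μ (closedBall x r) ≤ ENNReal.ofReal (K * r ^ (Module.finrank ℝ E - 1))) →
      ∀ φ : E → ℝ, Differentiable ℝ φ → (∀ s > 0, ν {x | s ≤ |φ x|} ≠ ∞) →
        Integrable (fderiv ℝ φ) ν → |∫ x, φ x ∂μ| ≤ c * K * ∫ x, ‖fderiv ℝ φ x‖ ∂ν := by
  refine ⟨(2 * boxingConst ν).toReal, ENNReal.toReal_pos
    (mul_ne_zero two_ne_zero (boxingConst_ne_zero ν))
    (ENNReal.mul_ne_top ENNReal.ofNat_ne_top (boxingConst_ne_top ν)),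
    fun μ K hK hμ φ hφ hfin hint => ?_⟩
  lift K to ℝ≥0 using hK
  have growth : HasBallGrowth μ K (Module.finrank ℝ E - 1) := fun x r hr => by
    simpa only [ENNReal.ofReal_mul K.coe_nonneg, ENNReal.ofReal_coe_nnreal,
      ENNReal.ofReal_pow hr.le] using hμ x r hr
  have bound := (enorm_integral_le_lintegral_enorm φ).trans
    (growth.lintegral_enorm_le_lintegral_enorm_fderiv hφ hfin)
  rw [← ofReal_integral_norm_eq_lintegral_enorm hint] at bound
  have := ENNReal.toReal_mono (by have := boxingConst_ne_top ν; finiteness) bound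
  rwa [toReal_enorm, ENNReal.toReal_mul, ENNReal.toReal_mul, ENNReal.coe_toReal,
    ENNReal.toReal_ofReal (integral_nonneg fun _ => norm_nonneg _)] at this

end Haar

lemma measure_setOf_le_abs_ne_top {X : Type*} [TopologicalSpace X] [MeasurableSpace X]
    {ν : Measure X} [IsFiniteMeasureOnCompacts ν] {φ : X → ℝ} (hφ : HasCompactSupport φ)
    {s : ℝ} (hs : 0 < s) : ν {x | s ≤ |φ x|} ≠ ∞ :=
  measure_ne_top_of_subset
    (fun _ hx => subset_tsupport φ (abs_pos.1 (hs.trans_le hx))) hφ.measure_lt_top.ne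

/-- **Theorem 2.8 (Meyers–Ziemer inequality).**
If `μ` is a positive Radon measure on `ℝⁿ` with
`K(μ) = sup_{B_r(x)} μ(B_r(x))/r^{n-1} < ∞`, then there is `c(n)` such that
`|∫ φ dμ| ≤ c(n) K(μ) ∫ |∇φ| dx` for every `φ ∈ C¹_c(ℝⁿ)`. -/
theorem statement8 (n : ℕ) (hn : 1 ≤ n) :
    ∃ c > (0 : ℝ),
      ∀ (μ : Measure (EuclideanSpace ℝ (Fin n))) (K : ℝ), 0 ≤ K →
        (∀ (x : EuclideanSpace ℝ (Fin n)) (r : ℝ), 0 < r →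
          μ (closedBall x r) ≤ ENNReal.ofReal (K * r ^ (n - 1))) →
        ∀ φ : EuclideanSpace ℝ (Fin n) → ℝ, ContDiff ℝ 1 φ → HasCompactSupport φ →
          |∫ x, φ x ∂μ| ≤ c * K * ∫ x, ‖fderiv ℝ φ x‖ := by
  have : Nontrivial (EuclideanSpace ℝ (Fin n)) :=
    Module.nontrivial_of_finrank_pos (R := ℝ) (by rwa [finrank_euclideanSpace_fin])
  obtain ⟨c, c_pos, hc⟩ := statement8_general (volume : Measure (EuclideanSpace ℝ (Fin n)))
  rw [finrank_euclideanSpace_fin] at hc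
  refine ⟨c, c_pos, fun μ K hK hμ φ hφ hsupp => ?_⟩
  exact hc μ K hK hμ φ (hφ.differentiable one_ne_zero)
    (fun _ hs => measure_setOf_le_abs_ne_top hsupp hs)
    ((hφ.continuous_fderiv one_ne_zero).integrable_of_hasCompactSupport (hsupp.fderiv ℝ))
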